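/- The 𝕜-bilinear bracket on the free 𝕜-module with basis {w_x : x ∈ ℤ² ∖ {(0,0)}} defined by [w_x, w_y] = {det(x y)} w_{x+y} (with the convention w_{(0,0)} := 0) is alternating ([v,v] = 0 for all v) and satisfies the Jacobi identity; in particular it makes this free module into a Lie algebra over 𝕜 (the elliptic Hall Lie algebra 𝔢). -/

import Mathlib

/-!
STATEMENT 0: The 𝕜-bilinear bracket on the free 𝕜-module with basis
`{w_x : x ∈ ℤ² ∖ {(0,0)}}` defined by `[w_x, w_y] = {det(x y)} w_{x+y}`
(with `w_{(0,0)} := 0`) is alternating and satisfies the Jacobi identity;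
in particular it makes this free module into a Lie algebra over 𝕜.
-/

namespace EHAProj

noncomputable section

variable (𝕜 : Type*) [CommRing 𝕜]

/-- `{d} := q^d - q^{-d}`. -/
def qint (q : 𝕜ˣ) (d : ℤ) : 𝕜 := ((q ^ d : 𝕜ˣ) : 𝕜) - ((q ^ (-d) : 𝕜ˣ) : 𝕜)

/-- The determinant of the 2×2 integer matrix with columns `x` and `y`. -/
def det2 (x y : ℤ × ℤ) : ℤ := x.1 * y.2 - x.2 * y.1

/-- The index set `ℤ² ∖ {(0,0)}`. -/
abbrev Idx : Type := {x : ℤ × ℤ // x ≠ 0}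

/-- The free `𝕜`-module with basis indexed by `ℤ² ∖ {(0,0)}`. -/
abbrev EH0 : Type _ := Idx →₀ 𝕜

variable {𝕜}

/-- The basis elements `w_x`, with the convention `w_{(0,0)} = 0`. -/
def w (x : ℤ × ℤ) : EH0 𝕜 :=
  if h : x = 0 then 0 else Finsupp.single (⟨x, h⟩ : Idx) (1 : 𝕜)

/-- The bracket `[w_x, w_y] = {det(x y)} w_{x+y}`, extended bilinearly. -/
def ehBracket (q : 𝕜ˣ) (f g : EH0 𝕜) : EH0 𝕜 :=
  Finsupp.sum f fun x a => Finsupp.sum g fun y b =>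
    (a * b * qint 𝕜 q (det2 x.1 y.1)) • w (x.1 + y.1)

/-!
Both identities are multilinear, so it suffices to check them on the vectors `w x`, which span.
There `[w x, w x] = 0` and skew-symmetry hold because the determinant is alternating and `{·}` is
odd. For the Jacobi identity put `a = det(x, y)`, `b = det(y, z)`, `c = det(z, x)`: then
`det(x + y, z) = b - c`, and cyclically, so the claim becomes
`{a}{b - c} + {b}{c - a} + {c}{a - b} = 0`. With `t d = q^d + q^{-d}` the first product is
`t (a + b - c) - t (c + a - b)`, and the sum over cyclic permutations telescopes.
-/

section Multilinear

variable {R M N ι : Type*} [CommSemiring R] [AddCommMonoid M] [Module R M]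
  [AddCommMonoid N] [Module R N] {v : ι → M}

theorem isAlt_of_span_range_eq_top {B : M →ₗ[R] M →ₗ[R] N}
    (hv : Submodule.span R (Set.range v) = ⊤) (hself : ∀ i, B (v i) (v i) = 0)
    (hskew : ∀ i j, B (v i) (v j) + B (v j) (v i) = 0) : B.IsAlt := by
  have hB : B + B.flip = 0 :=
    LinearMap.ext_on_range hv fun i => LinearMap.ext_on_range hv fun j => hskew i j
  intro f
  induction (hv ▸ Submodule.mem_top : f ∈ Submodule.span R (Set.range v))
    using Submodule.span_induction with
  | mem _ hf => obtain ⟨i, rfl⟩ := hf; exact hself i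
  | zero => exact map_zero _
  | add f g _ _ hf hg =>
    have hfg : B f g + B g f = 0 := LinearMap.congr_fun₂ hB f g
    rw [map_add, LinearMap.map_add₂, LinearMap.map_add₂, hf, hg, zero_add, add_zero,
      add_comm, hfg]
  | smul c f _ hf => rw [map_smul, LinearMap.map_smul₂, hf, smul_zero, smul_zero]

/-- The trilinear map `(f, g, h) ↦ T g h f`, whose iterates are the cyclic permutations of the
arguments of `T`. -/
def cyclicRotation (T : M →ₗ[R] M →ₗ[R] M →ₗ[R] N) : M →ₗ[R] M →ₗ[R] M →ₗ[R] N :=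
  ((LinearMap.lflip (R₀ := R)).toLinearMap ∘ₗ T).flip

/-- The Jacobiator of a bilinear product, as a trilinear map: the Jacobi identity says that it
vanishes. -/
def jacobiator (B : M →ₗ[R] M →ₗ[R] M) : M →ₗ[R] M →ₗ[R] M →ₗ[R] M :=
  B.compr₂ B + cyclicRotation (B.compr₂ B) + cyclicRotation (cyclicRotation (B.compr₂ B))

theorem jacobiator_apply (B : M →ₗ[R] M →ₗ[R] M) (f g h : M) :
    jacobiator B f g h = B (B f g) h + B (B g h) f + B (B h f) g :=
  rfl

theorem jacobi_of_span_range_eq_top {B : M →ₗ[R] M →ₗ[R] M}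
    (hv : Submodule.span R (Set.range v) = ⊤)
    (h : ∀ i j k, B (B (v i) (v j)) (v k) + B (B (v j) (v k)) (v i)
      + B (B (v k) (v i)) (v j) = 0) (x y z : M) :
    B (B x y) z + B (B y z) x + B (B z x) y = 0 := by
  have hB : jacobiator B = 0 :=
    LinearMap.ext_on_range hv fun i => LinearMap.ext_on_range hv fun j =>
      LinearMap.ext_on_range hv fun k => h i j k
  rw [← jacobiator_apply, hB, LinearMap.zero_apply, LinearMap.zero_apply, LinearMap.zero_apply]

end Multilinear

theorem qint_zero (q : 𝕜ˣ) : qint 𝕜 q 0 = 0 := by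
  simp [qint]

theorem qint_neg (q : 𝕜ˣ) (d : ℤ) : qint 𝕜 q (-d) = -qint 𝕜 q d := by
  simp [qint]

theorem qint_mul_qint_sub_cyclic (q : 𝕜ˣ) (a b c : ℤ) :
    qint 𝕜 q a * qint 𝕜 q (b - c) + qint 𝕜 q b * qint 𝕜 q (c - a)
      + qint 𝕜 q c * qint 𝕜 q (a - b) = 0 := by
  simp only [qint, neg_sub, zpow_sub, zpow_neg, Units.val_mul]
  ring

theorem det2_zero_left (y : ℤ × ℤ) : det2 0 y = 0 := by
  simp [det2]

theorem det2_self (x : ℤ × ℤ) : det2 x x = 0 := by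
  rw [det2, mul_comm, sub_self]

theorem det2_swap (x y : ℤ × ℤ) : det2 y x = -det2 x y := by
  simp only [det2]
  ring

theorem det2_add_left (x y z : ℤ × ℤ) : det2 (x + y) z = det2 y z - det2 z x := by
  simp only [det2, Prod.fst_add, Prod.snd_add]
  ring

theorem w_zero : (w 0 : EH0 𝕜) = 0 :=
  dif_pos rfl

theorem w_coe (x : Idx) : (w x.1 : EH0 𝕜) = Finsupp.single x 1 :=
  dif_neg x.2

theorem span_range_w : Submodule.span 𝕜 (Set.range (w : ℤ × ℤ → EH0 𝕜)) = ⊤ := by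
  rw [eq_top_iff, ← (Finsupp.basisSingleOne (R := 𝕜) (ι := Idx)).span_eq]
  refine Submodule.span_mono ?_
  rintro _ ⟨x, rfl⟩
  exact ⟨x.1, by rw [w_coe, Finsupp.coe_basisSingleOne]⟩

/-- The bracket `ehBracket q` as a bundled bilinear map. -/
def ehBilin (q : 𝕜ˣ) : EH0 𝕜 →ₗ[𝕜] EH0 𝕜 →ₗ[𝕜] EH0 𝕜 :=
  Finsupp.linearCombination 𝕜 fun x : Idx =>
    Finsupp.linearCombination 𝕜 fun y : Idx => qint 𝕜 q (det2 x.1 y.1) • w (x.1 + y.1)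

theorem ehBilin_apply (q : 𝕜ˣ) (f g : EH0 𝕜) : ehBilin q f g = ehBracket q f g := by
  simp only [ehBilin, ehBracket, Finsupp.linearCombination_apply, Finsupp.sum,
    LinearMap.sum_apply, LinearMap.smul_apply, Finset.smul_sum, smul_smul, mul_assoc]

theorem ehBilin_w_w (q : 𝕜ˣ) (x y : ℤ × ℤ) :
    ehBilin q (w x) (w y) = qint 𝕜 q (det2 x y) • w (x + y) := by
  obtain rfl | hx := eq_or_ne x 0
  · rw [w_zero, LinearMap.map_zero₂, det2_zero_left, qint_zero, zero_smul]
  obtain rfl | hy := eq_or_ne y 0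
  · rw [w_zero, map_zero, det2_swap, det2_zero_left, neg_zero, qint_zero, zero_smul]
  lift x to Idx using hx
  lift y to Idx using hy
  simp only [w_coe, ehBilin, Finsupp.linearCombination_single, one_smul]

theorem isAlt_ehBilin (q : 𝕜ˣ) : (ehBilin q).IsAlt := by
  refine isAlt_of_span_range_eq_top span_range_w (fun x => ?_) fun x y => ?_
  · rw [ehBilin_w_w, det2_self, qint_zero, zero_smul]
  · rw [ehBilin_w_w, ehBilin_w_w, det2_swap x y, qint_neg, add_comm y x, neg_smul, add_neg_cancel]

theorem ehBilin_ehBilin_w_w_w (q : 𝕜ˣ) (x y z : ℤ × ℤ) :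
    ehBilin q (ehBilin q (w x) (w y)) (w z) =
      (qint 𝕜 q (det2 x y) * qint 𝕜 q (det2 y z - det2 z x)) • w (x + y + z) := by
  rw [ehBilin_w_w, LinearMap.map_smul₂, ehBilin_w_w, det2_add_left, smul_smul]

theorem ehBilin_jacobi (q : 𝕜ˣ) (f g h : EH0 𝕜) :
    ehBilin q (ehBilin q f g) h + ehBilin q (ehBilin q g h) f
      + ehBilin q (ehBilin q h f) g = 0 := by
  refine jacobi_of_span_range_eq_top span_range_w (fun x y z => ?_) f g h
  have hyzx : y + z + x = x + y + z := by abel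
  have hzxy : z + x + y = x + y + z := by abel
  simp only [ehBilin_ehBilin_w_w_w, hyzx, hzxy, ← add_smul]
  rw [qint_mul_qint_sub_cyclic, zero_smul]

theorem ehBracket_isLieBracket_general {𝕜 : Type*} [CommRing 𝕜] (q : 𝕜ˣ) :
    (∀ x y : ℤ × ℤ, ehBracket q (w x) (w y) = qint 𝕜 q (det2 x y) • w (x + y)) ∧
    (∀ f g h : EH0 𝕜, ehBracket q (f + g) h = ehBracket q f h + ehBracket q g h) ∧
    (∀ f g h : EH0 𝕜, ehBracket q f (g + h) = ehBracket q f g + ehBracket q f h) ∧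
    (∀ (c : 𝕜) (f g : EH0 𝕜), ehBracket q (c • f) g = c • ehBracket q f g) ∧
    (∀ (c : 𝕜) (f g : EH0 𝕜), ehBracket q f (c • g) = c • ehBracket q f g) ∧
    (∀ f : EH0 𝕜, ehBracket q f f = 0) ∧
    (∀ f g h : EH0 𝕜,
      ehBracket q (ehBracket q f g) h + ehBracket q (ehBracket q g h) f +
        ehBracket q (ehBracket q h f) g = 0) := by
  simp only [← ehBilin_apply]
  exact ⟨ehBilin_w_w q, LinearMap.map_add₂ _, fun f => map_add (ehBilin q f),
    LinearMap.map_smul₂ _, fun c f => map_smul (ehBilin q f) c, isAlt_ehBilin q,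
    ehBilin_jacobi q⟩

/-- The bracket determined by `[w_x, w_y] = {det(x y)} w_{x+y}` is `𝕜`-bilinear, is
alternating, and satisfies the Jacobi identity; hence it makes the free `𝕜`-module with
basis `{w_x : x ∈ ℤ² ∖ {(0,0)}}` into a Lie algebra over `𝕜`. -/
theorem ehBracket_isLieBracket {𝕜 : Type*} [CommRing 𝕜] [IsDomain 𝕜] (q : 𝕜ˣ) :
    -- the bracket takes the prescribed values on the basis elements
    (∀ x y : ℤ × ℤ, ehBracket q (w x) (w y) = qint 𝕜 q (det2 x y) • w (x + y)) ∧
    -- the bracket is additive in each variable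
    (∀ f g h : EH0 𝕜, ehBracket q (f + g) h = ehBracket q f h + ehBracket q g h) ∧
    (∀ f g h : EH0 𝕜, ehBracket q f (g + h) = ehBracket q f g + ehBracket q f h) ∧
    -- the bracket is `𝕜`-homogeneous in each variable
    (∀ (c : 𝕜) (f g : EH0 𝕜), ehBracket q (c • f) g = c • ehBracket q f g) ∧
    (∀ (c : 𝕜) (f g : EH0 𝕜), ehBracket q f (c • g) = c • ehBracket q f g) ∧
    -- the bracket is alternating
    (∀ f : EH0 𝕜, ehBracket q f f = 0) ∧
    -- the bracket satisfies the Jacobi identity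
    (∀ f g h : EH0 𝕜,
      ehBracket q (ehBracket q f g) h + ehBracket q (ehBracket q g h) f +
        ehBracket q (ehBracket q h f) g = 0) :=
  ehBracket_isLieBracket_general q

end
end EHAProj
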